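/- For every constant κ > 0 there exist W₀ and K such that for all W ≥ W₀, all cubes Λ of side W in ℤ³, and all E ∈ 𝓘 the following holds: with H(a) = aᵀC⁻¹a − κ Σ_{j∈Λ}(|a_j|³ + |a_j|/W²), with the small-field region I¹ = {a ∈ ℝ^Λ : |a_j| ≤ W^{−1/8} for all j}, with Z(H) = ∫_{I¹} e^{−½H(a)} da and with Z₀ = ∫_{ℝ^Λ} e^{−½ aᵀC⁻¹a} da, one has Z(H) ≤ e^{K|Λ|/W³} Z₀. -/

import Mathlib

open scoped BigOperators Topology
open Matrix MeasureTheory Filter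

noncomputable section

/-- The discrete torus of side lengths `L i`; when each `L i` is a positive multiple of `W`,
this is a union of cubes of side `W` (containing `0`) with periodic boundary conditions. -/
abbrev Torus (L : Fin 3 → ℕ) := (i : Fin 3) → ZMod (L i)

/-- Unit lattice vector in direction `i`. -/
def unitVec (L : Fin 3 → ℕ) (i : Fin 3) : Torus L := fun j => if j = i then 1 else 0

/-- Discrete Laplacian with periodic boundary conditions. -/
def lap (L : Fin 3 → ℕ) : Matrix (Torus L) (Torus L) ℝ :=
  Matrix.of fun x y =>
    (∑ i : Fin 3, ((if y = x + unitVec L i then (1 : ℝ) else 0) +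
        (if y = x - unitVec L i then (1 : ℝ) else 0))) - (if y = x then 6 else 0)

/-- Distance to `0` in `ℤ/n`, via the minimal representative. -/
def zdist {n : ℕ} (x : ZMod n) : ℕ := min x.val (n - x.val)

/-- Euclidean distance on the torus. -/
def tdist (L : Fin 3 → ℕ) (x y : Torus L) : ℝ :=
  Real.sqrt (∑ i : Fin 3, ((zdist (x i - y i) : ℝ)) ^ 2)

/-- The band covariance profile `J = (-W²Δ + 1)⁻¹`. -/
def Jmat (L : Fin 3 → ℕ) [∀ i, NeZero (L i)] (W : ℕ) : Matrix (Torus L) (Torus L) ℝ :=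
  (((W : ℝ) ^ 2) • (-lap L) + 1)⁻¹

def mr2 (E : ℝ) : ℝ := 2 * (1 - E ^ 2 / 4)
def mi2 (E : ℝ) : ℝ := E * Real.sqrt (1 - E ^ 2 / 4)
def mr (E : ℝ) : ℝ := Real.sqrt (mr2 E)

/-- `ℰ = E/2 - i√(1 - E²/4)`. -/
def calE (E : ℝ) : ℂ := ((E / 2 : ℝ) : ℂ) - (Real.sqrt (1 - E ^ 2 / 4) : ℝ) * Complex.I
/-- `ℰ̄ = E - ℰ = E/2 + i√(1 - E²/4)`, the complex conjugate of `ℰ`. -/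
def calEbar (E : ℝ) : ℂ := ((E / 2 : ℝ) : ℂ) + (Real.sqrt (1 - E ^ 2 / 4) : ℝ) * Complex.I

/-- `C = (-W²Δ + m_r²)⁻¹`. -/
def Cmat (L : Fin 3 → ℕ) [∀ i, NeZero (L i)] (W : ℕ) (E : ℝ) : Matrix (Torus L) (Torus L) ℝ :=
  (((W : ℝ) ^ 2) • (-lap L) + mr2 E • 1)⁻¹

/-- `B = (C⁻¹ + i m_i²·Id)⁻¹`. -/
def Bmat (L : Fin 3 → ℕ) [∀ i, NeZero (L i)] (W : ℕ) (E : ℝ) : Matrix (Torus L) (Torus L) ℂ :=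
  (((Cmat L W E)⁻¹).map Complex.ofReal + (mi2 E * Complex.I) • 1)⁻¹

/-- The energy window `𝓘 = {E : η ≤ |E| ≤ 1.8}`. -/
def specI (η : ℝ) : Set ℝ := {E : ℝ | η ≤ |E| ∧ |E| ≤ 1.8}

/-- Wigner semicircle density `(1/π)√(1 - E²/4)`. -/
def rhoSC (E : ℝ) : ℝ := Real.sqrt (1 - E ^ 2 / 4) / Real.pi

/-- Real quadratic form `aᵀ M a`. -/
def qf (L : Fin 3 → ℕ) [∀ i, NeZero (L i)] (M : Matrix (Torus L) (Torus L) ℝ)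
    (a : Torus L → ℝ) : ℝ := a ⬝ᵥ M.mulVec a

section GaussianPerturbation

variable {ι : Type*} [Fintype ι]

lemma hasDerivAt_mul_abs_self (x : ℝ) : HasDerivAt (fun y : ℝ => y * |y|) (2 * |x|) x := by
  rcases lt_trichotomy x 0 with hx | rfl | hx
  · have h := (hasDerivAt_id x).mul (hasDerivAt_abs_neg hx)
    refine h.congr_deriv ?_
    simp [abs_of_neg hx]; ring
  · rw [hasDerivAt_iff_tendsto_slope_zero]
    have h : Tendsto (fun t : ℝ => |t|) (𝓝[≠] 0) (𝓝 (2 * |0|)) := by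
      simpa using (continuous_abs.tendsto (0 : ℝ)).mono_left nhdsWithin_le_nhds
    refine h.congr' ?_
    filter_upwards [self_mem_nhdsWithin] with t ht
    have : t ≠ 0 := ht
    simp [this]
  · have h := (hasDerivAt_id x).mul (hasDerivAt_abs_pos hx)
    refine h.congr_deriv ?_
    simp [abs_of_pos hx]; ring

lemma sub_mul_mul_abs_sub_le {x y δ : ℝ} (hx : |x| ≤ δ) (hy : |y| ≤ δ) :
    (x - y) * (x * |x| - y * |y|) ≤ 2 * δ * (x - y) ^ 2 := by
  obtain ⟨hx1, hx2⟩ := abs_le.1 hx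
  obtain ⟨hy1, hy2⟩ := abs_le.1 hy
  rcases abs_cases x with ⟨h1, h1'⟩ | ⟨h1, h1'⟩ <;> rcases abs_cases y with ⟨h2, h2'⟩ | ⟨h2, h2'⟩ <;>
    rw [h1, h2]
  · nlinarith [mul_nonneg (sq_nonneg (x - y)) (by linarith : 0 ≤ 2 * δ - x - y)]
  · have h : x ^ 2 + y ^ 2 ≤ 2 * δ * (x - y) := by
      nlinarith [mul_nonneg h1' (sub_nonneg.2 hx2), mul_nonneg (neg_nonneg.2 h2'.le)
        (by linarith : 0 ≤ δ + y)]
    nlinarith [mul_le_mul_of_nonneg_left h (by linarith : 0 ≤ x - y)]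
  · have h : x ^ 2 + y ^ 2 ≤ 2 * δ * (y - x) := by
      nlinarith [mul_nonneg h2' (sub_nonneg.2 hy2), mul_nonneg (neg_nonneg.2 h1'.le)
        (by linarith : 0 ≤ δ + x)]
    nlinarith [mul_le_mul_of_nonneg_left h (by linarith : 0 ≤ y - x)]
  · nlinarith [mul_nonneg (sq_nonneg (x - y)) (by linarith : 0 ≤ 2 * δ + x + y)]

lemma integrable_exp_neg_dotProduct_mulVec {A : Matrix ι ι ℝ} {m : ℝ} (hm : 0 < m)
    (hA : ∀ x : ι → ℝ, m * (x ⬝ᵥ x) ≤ x ⬝ᵥ A *ᵥ x) :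
    Integrable fun x : ι → ℝ => Real.exp (-(1 / 2) * (x ⬝ᵥ A *ᵥ x)) := by
  have h : Integrable fun x : ι → ℝ => ∏ i, Real.exp (-(m / 2) * x i ^ 2) :=
    Integrable.fintype_prod fun _ => integrable_exp_neg_mul_sq (by positivity)
  refine h.mono' (Continuous.aestronglyMeasurable (by fun_prop)) (ae_of_all _ fun x => ?_)
  rw [Real.norm_eq_abs, abs_of_pos (Real.exp_pos _), ← Real.exp_sum, Real.exp_le_exp,
    ← Finset.mul_sum]
  have := hA x
  simp only [dotProduct, ← sq] at this ⊢
  linarith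

variable [DecidableEq ι]

/-- If the quadratic form of `S` lies between `0` and `1/2`, then
`det (1 - S)` is at least `exp (-2 tr S)`. -/
lemma exp_neg_two_mul_trace_le_det_one_sub {S : Matrix ι ι ℝ} (hS : S.IsHermitian)
    (h0 : ∀ v : ι → ℝ, 0 ≤ v ⬝ᵥ S *ᵥ v) (h1 : ∀ v : ι → ℝ, v ⬝ᵥ S *ᵥ v ≤ 1 / 2 * (v ⬝ᵥ v)) :
    Real.exp (-2 * S.trace) ≤ (1 - S).det := by
  have hR : (1 - S).IsHermitian := Matrix.isHermitian_one.sub hS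
  have hev : ∀ i, 1 / 2 ≤ hR.eigenvalues i ∧ hR.eigenvalues i ≤ 1 := by
    intro i
    set v : ι → ℝ := (hR.eigenvectorBasis i).ofLp with hv
    have hn : v ⬝ᵥ v = 1 := by
      have := hR.eigenvectorBasis.orthonormal.1 i
      rw [EuclideanSpace.norm_eq, Real.sqrt_eq_one] at this
      simpa [dotProduct, sq, hv] using this
    have he : hR.eigenvalues i = 1 - v ⬝ᵥ S *ᵥ v := by
      rw [hR.eigenvalues_eq i]
      simp [← hv, Matrix.sub_mulVec, hn]
    have h0' := h0 v
    have h1' := h1 v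
    rw [hn] at h1'
    constructor <;> linarith
  rw [hR.det_eq_prod_eigenvalues]
  have htr : S.trace = ∑ i, (1 - hR.eigenvalues i) := by
    have h := hR.trace_eq_sum_eigenvalues
    simp only [Matrix.trace_sub, Matrix.trace_one, RCLike.ofReal_real_eq_id, id] at h
    rw [Finset.sum_sub_distrib, ← h]
    simp
  rw [htr, Finset.mul_sum, Real.exp_sum]
  refine Finset.prod_le_prod (fun _ _ => (Real.exp_pos _).le) fun i _ => ?_
  obtain ⟨h2, h3⟩ := hev i
  have hpos : 0 < hR.eigenvalues i := by linarith
  simp only [RCLike.ofReal_real_eq_id, id]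
  rw [← Real.le_log_iff_exp_le hpos]
  refine le_trans ?_ (Real.one_sub_inv_le_log_of_pos hpos)
  have : (hR.eigenvalues i)⁻¹ - 1 = (1 - hR.eigenvalues i) * (hR.eigenvalues i)⁻¹ := by
    field_simp
  have h4 : (hR.eigenvalues i)⁻¹ ≤ 2 := by
    rw [inv_le_comm₀ hpos (by norm_num)]; linarith
  nlinarith

/-- A matrix bounded below by `m` has an inverse bounded above by `1/m`. -/
lemma dotProduct_mulVec_inverse_bounds {A C : Matrix ι ι ℝ} (hAC : A * C = 1) {m : ℝ} (hm : 0 < m)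
    (hA : ∀ x : ι → ℝ, m * (x ⬝ᵥ x) ≤ x ⬝ᵥ A *ᵥ x) (x : ι → ℝ) :
    0 ≤ x ⬝ᵥ C *ᵥ x ∧ m * (x ⬝ᵥ C *ᵥ x) ≤ x ⬝ᵥ x := by
  have hx : A *ᵥ (C *ᵥ x) = x := by rw [Matrix.mulVec_mulVec, hAC, Matrix.one_mulVec]
  set y := C *ᵥ x
  have h1 := hA y
  rw [hx, dotProduct_comm y x] at h1
  have h0 : 0 ≤ y ⬝ᵥ y := by simpa using dotProduct_star_self_nonneg y
  refine ⟨le_trans (by positivity) h1, ?_⟩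
  have h2 : 0 ≤ (m • y - x) ⬝ᵥ (m • y - x) := by
    simpa using dotProduct_star_self_nonneg (m • y - x)
  simp only [sub_dotProduct, dotProduct_sub, smul_dotProduct, dotProduct_smul, smul_eq_mul,
    dotProduct_comm y x] at h2
  nlinarith

/-- The determinant of `1 - C diag(d)` for small nonnegative `d`. -/
lemma exp_le_det_one_sub_mul_diagonal {A C : Matrix ι ι ℝ} (hAC : A * C = 1) (hC : C.IsSymm)
    {m : ℝ} (hm : 0 < m) (hA : ∀ x : ι → ℝ, m * (x ⬝ᵥ x) ≤ x ⬝ᵥ A *ᵥ x)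
    {d : ι → ℝ} (hd0 : ∀ i, 0 ≤ d i) (hd : ∀ i, 2 * d i ≤ m) :
    Real.exp (-2 * ∑ i, C i i * d i) ≤ (1 - C * diagonal d).det := by
  set e : ι → ℝ := fun i => √(d i)
  have he : diagonal d = diagonal e * diagonal e := by
    rw [diagonal_mul_diagonal]; congr 1; ext i; exact (Real.mul_self_sqrt (hd0 i)).symm
  rw [he, ← Matrix.mul_assoc, Matrix.det_one_sub_mul_comm]
  have hq : ∀ v : ι → ℝ, v ⬝ᵥ (diagonal e * (C * diagonal e)) *ᵥ v
      = (diagonal e *ᵥ v) ⬝ᵥ C *ᵥ (diagonal e *ᵥ v) := by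
    intro v
    rw [← Matrix.mulVec_mulVec, ← Matrix.mulVec_mulVec, Matrix.dotProduct_mulVec,
      ← Matrix.mulVec_transpose, diagonal_transpose]
  convert exp_neg_two_mul_trace_le_det_one_sub (S := diagonal e * (C * diagonal e)) ?_ ?_ ?_ using 3
  · refine Finset.sum_congr rfl fun i _ => ?_
    simp only [diag_apply, diagonal_mul, mul_diagonal]
    rw [← Real.mul_self_sqrt (hd0 i)]; simp only [e]; ring_nf
  · rw [Matrix.IsHermitian, conjTranspose_eq_transpose_of_trivial]
    simp [Matrix.transpose_mul, hC.eq, Matrix.mul_assoc]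
  · intro v
    rw [hq]
    exact (dotProduct_mulVec_inverse_bounds hAC hm hA _).1
  · intro v
    rw [hq]
    have h := (dotProduct_mulVec_inverse_bounds hAC hm hA (diagonal e *ᵥ v)).2
    have h2 : (diagonal e *ᵥ v) ⬝ᵥ (diagonal e *ᵥ v) ≤ m / 2 * (v ⬝ᵥ v) := by
      simp only [dotProduct, mulVec_diagonal, Finset.mul_sum]
      refine Finset.sum_le_sum fun i _ => ?_
      have : e i * v i * (e i * v i) = d i * (v i * v i) := by
        rw [← Real.mul_self_sqrt (hd0 i)]; simp only [e]; ring_nf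
      rw [this]
      exact mul_le_mul_of_nonneg_right (by linarith [hd i]) (mul_self_nonneg _)
    have h3 : m * (diagonal e *ᵥ v ⬝ᵥ C *ᵥ diagonal e *ᵥ v) ≤ m * (1 / 2 * (v ⬝ᵥ v)) := by
      linarith
    exact le_of_mul_le_mul_left h3 hm

/-- A cubic perturbation of a Gaussian weight on a small box costs at most
`exp (O (|ι| r³))`, where `r²` bounds the variances. -/
theorem integral_exp_cubic_le {A C : Matrix ι ι ℝ} (hAC : A * C = 1) (hsymm : A.IsSymm)
    {m β δ r : ℝ} (hm : 0 < m) (hβ : 0 < β) (hr : 0 ≤ r)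
    (hA : ∀ x : ι → ℝ, m * (x ⬝ᵥ x) ≤ x ⬝ᵥ A *ᵥ x)
    (hδm : 16 * β * δ ≤ m) (hdiag : ∀ j, C j j ≤ r ^ 2) :
    ∫ a in {a : ι → ℝ | ∀ j, |a j| ≤ δ},
        Real.exp (-(1 / 2) * (a ⬝ᵥ A *ᵥ a) + β * ∑ j, |a j| ^ 3)
      ≤ Real.exp (32 * β * r ^ 3 * Fintype.card ι) *
        ∫ a : ι → ℝ, Real.exp (-(1 / 2) * (a ⬝ᵥ A *ᵥ a)) := by
  have hC : C.IsSymm := by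
    have h := congrArg transpose hAC
    rw [transpose_mul, hsymm.eq, transpose_one] at h
    exact left_inv_eq_right_inv h hAC
  set D : Set (ι → ℝ) := {a | ∀ j, |a j| ≤ δ} with hD
  have hDc : IsCompact D := by
    have : D = Set.pi Set.univ fun _ => Set.Icc (-δ) δ := by
      ext a; simp only [hD, Set.mem_ofPred_eq, abs_le, Set.mem_univ_pi, Set.mem_Icc]
    rw [this]
    exact isCompact_univ_pi fun _ => isCompact_Icc
  set g : (ι → ℝ) → ι → ℝ := fun a j => a j * |a j| with hg
  set T : (ι → ℝ) → ι → ℝ := fun a => a - (4 * β) • (C *ᵥ g a) with hT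
  set M : (ι → ℝ) → Matrix ι ι ℝ := fun a => 1 - C * diagonal fun j => 8 * β * |a j| with hM
  set T' : (ι → ℝ) → (ι → ℝ) →L[ℝ] (ι → ℝ) :=
    fun a => LinearMap.toContinuousLinearMap (Matrix.toLin' (M a)) with hT'
  have hTderiv : ∀ a ∈ D, HasFDerivWithinAt T (T' a) D a := by
    intro a _
    have hgd : HasFDerivAt g (LinearMap.toContinuousLinearMap
        (Matrix.toLin' (diagonal fun j => 2 * |a j|))) a := by
      rw [hasFDerivAt_pi']
      intro j
      have h := (hasDerivAt_mul_abs_self (a j)).hasFDerivAt.comp a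
        (ContinuousLinearMap.proj (R := ℝ) (φ := fun _ : ι => ℝ) j).hasFDerivAt
      refine h.congr_fderiv ?_
      ext v
      simp [mulVec_diagonal, mul_comm]
    have h2 := ((LinearMap.toContinuousLinearMap (Matrix.toLin' C)).hasFDerivAt.comp a hgd).const_smul
      (4 * β)
    have h3 := ((hasFDerivAt_id a).sub h2).hasFDerivWithinAt (s := D)
    refine h3.congr_fderiv ?_
    ext1 v
    simp only [hT', hM]
    have : (fun j => 8 * β * |a j|) = (4 * β) • fun j => 2 * |a j| := by
      ext j; simp; ring
    rw [this, diagonal_smul, Matrix.mul_smul]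
    simp [Matrix.mulVec_mulVec]
  have hinj : Set.InjOn T D := by
    intro a ha b hb hab
    have h1 : a - b = (4 * β) • (C *ᵥ (g a - g b)) := by
      rw [Matrix.mulVec_sub, smul_sub]
      simp only [hT] at hab
      rw [sub_eq_sub_iff_add_eq_add] at hab ⊢
      rw [hab, add_comm]
    have h2 : A *ᵥ (a - b) = (4 * β) • (g a - g b) := by
      rw [h1, Matrix.mulVec_smul, Matrix.mulVec_mulVec, hAC, Matrix.one_mulVec]
    have h3 := hA (a - b)
    rw [h2, dotProduct_smul, smul_eq_mul] at h3
    have h4 : (a - b) ⬝ᵥ (g a - g b) ≤ 2 * δ * ((a - b) ⬝ᵥ (a - b)) := by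
      simp only [dotProduct, Finset.mul_sum, Pi.sub_apply, hg, ← sq]
      exact Finset.sum_le_sum fun j _ => sub_mul_mul_abs_sub_le (ha j) (hb j)
    have h5 : 0 ≤ (a - b) ⬝ᵥ (a - b) := by simpa using dotProduct_star_self_nonneg (a - b)
    have h6 : (a - b) ⬝ᵥ (a - b) = 0 := by nlinarith
    exact sub_eq_zero.1 (dotProduct_self_eq_zero.1 h6)
  have hint := integrable_exp_neg_dotProduct_mulVec hm hA
  have hmeas := hDc.isClosed.measurableSet
  have hdet : ∀ a, |(T' a).det| = |(M a).det| := by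
    intro a
    simp [hT', ContinuousLinearMap.det]
  have key : ∀ a ∈ D, Real.exp (-(1 / 2) * (a ⬝ᵥ A *ᵥ a) + β * ∑ j, |a j| ^ 3)
      ≤ Real.exp (32 * β * r ^ 3 * Fintype.card ι) *
        (|(T' a).det| • Real.exp (-(1 / 2) * (T a ⬝ᵥ A *ᵥ T a))) := by
    intro a ha
    have hd := exp_le_det_one_sub_mul_diagonal hAC hC hm hA
      (d := fun j => 8 * β * |a j|) (fun j => by positivity)
      (fun j => by have := ha j; nlinarith)
    have hd' : Real.exp (-16 * β * ∑ j, r ^ 2 * |a j|) ≤ |(T' a).det| := by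
      rw [hdet]
      refine le_trans (le_trans (Real.exp_le_exp.2 ?_) hd) (le_abs_self _)
      have : ∑ j, C j j * (8 * β * |a j|) ≤ 8 * β * ∑ j, r ^ 2 * |a j| := by
        rw [Finset.mul_sum]
        refine Finset.sum_le_sum fun j _ => ?_
        nlinarith [mul_le_mul_of_nonneg_right (hdiag j)
          (by positivity : 0 ≤ 8 * β * |a j|)]
      linarith
    have hquad : T a ⬝ᵥ A *ᵥ T a ≤ a ⬝ᵥ A *ᵥ a - 4 * β * ∑ j, |a j| ^ 3 := by
      have hATa : A *ᵥ T a = A *ᵥ a - (4 * β) • g a := by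
        simp only [hT]
        rw [Matrix.mulVec_sub, Matrix.mulVec_smul, Matrix.mulVec_mulVec, hAC, Matrix.one_mulVec]
      have hCA : (C *ᵥ g a) ⬝ᵥ A *ᵥ a = g a ⬝ᵥ a := by
        rw [Matrix.dotProduct_mulVec, ← Matrix.mulVec_transpose, hsymm.eq, Matrix.mulVec_mulVec,
          hAC, Matrix.one_mulVec]
      have hexp : T a ⬝ᵥ A *ᵥ T a
          = a ⬝ᵥ A *ᵥ a - 8 * β * (g a ⬝ᵥ a) + 16 * β ^ 2 * (g a ⬝ᵥ C *ᵥ g a) := by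
        rw [hATa]
        simp only [hT, sub_dotProduct, dotProduct_sub, smul_dotProduct, dotProduct_smul,
          smul_eq_mul, hCA]
        rw [dotProduct_comm a (g a), dotProduct_comm (C *ᵥ g a) (g a)]
        ring
      have hga : g a ⬝ᵥ a = ∑ j, |a j| ^ 3 := by
        refine Finset.sum_congr rfl fun j _ => ?_
        have := sq_abs (a j)
        simp only [hg]
        rw [pow_succ, this]; ring
      have hgg : g a ⬝ᵥ g a ≤ δ * ∑ j, |a j| ^ 3 := by
        rw [Finset.mul_sum]
        refine Finset.sum_le_sum fun j _ => ?_
        have h1 : g a j * g a j = |a j| * |a j| ^ 3 := by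
          simp only [hg]
          calc a j * |a j| * (a j * |a j|) = a j ^ 2 * |a j| ^ 2 := by ring
            _ = |a j| ^ 2 * |a j| ^ 2 := by rw [sq_abs]
            _ = _ := by ring
        rw [h1]
        exact mul_le_mul_of_nonneg_right (ha j) (by positivity)
      have hCg := (dotProduct_mulVec_inverse_bounds hAC hm hA (g a)).2
      have hS : 0 ≤ ∑ j, |a j| ^ 3 := Finset.sum_nonneg fun j _ => by positivity
      rw [hexp, hga]
      have h1 : 16 * β * (m * (g a ⬝ᵥ C *ᵥ g a)) ≤ m * ∑ j, |a j| ^ 3 := by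
        calc 16 * β * (m * (g a ⬝ᵥ C *ᵥ g a)) ≤ 16 * β * (δ * ∑ j, |a j| ^ 3) := by
              exact mul_le_mul_of_nonneg_left (hCg.trans hgg) (by positivity)
          _ = (16 * β * δ) * ∑ j, |a j| ^ 3 := by ring
          _ ≤ m * ∑ j, |a j| ^ 3 := by gcongr
      have h2 : 16 * β * (g a ⬝ᵥ C *ᵥ g a) ≤ ∑ j, |a j| ^ 3 :=
        le_of_mul_le_mul_left (by linarith) hm
      nlinarith
    have hlin : 16 * ∑ j, r ^ 2 * |a j| ≤ ∑ j, |a j| ^ 3 + 32 * r ^ 3 * Fintype.card ι := by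
      have : (32 * r ^ 3 * Fintype.card ι : ℝ) = ∑ _j : ι, 32 * r ^ 3 := by
        simp [mul_comm]
      rw [this, ← Finset.sum_add_distrib, Finset.mul_sum]
      refine Finset.sum_le_sum fun j _ => ?_
      have := abs_nonneg (a j)
      nlinarith [mul_nonneg (by positivity : 0 ≤ |a j| + 4.62 * r) (sq_nonneg (|a j| - 2.31 * r)),
        mul_nonneg (pow_nonneg hr 2) this, pow_nonneg hr 3]
    rw [smul_eq_mul]
    calc Real.exp (-(1 / 2) * (a ⬝ᵥ A *ᵥ a) + β * ∑ j, |a j| ^ 3)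
        ≤ Real.exp (32 * β * r ^ 3 * Fintype.card ι) * (Real.exp (-16 * β * ∑ j, r ^ 2 * |a j|) *
          Real.exp (-(1 / 2) * (T a ⬝ᵥ A *ᵥ T a))) := by
          rw [← Real.exp_add, ← Real.exp_add, Real.exp_le_exp]
          nlinarith [mul_le_mul_of_nonneg_left hlin hβ.le]
      _ ≤ _ := by gcongr
  have himg := integral_image_eq_integral_abs_det_fderiv_smul volume hmeas hTderiv hinj
    fun a => Real.exp (-(1 / 2) * (a ⬝ᵥ A *ᵥ a))
  have hion := (integrableOn_image_iff_integrableOn_abs_det_fderiv_smul volume hmeas hTderiv hinj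
    fun a => Real.exp (-(1 / 2) * (a ⬝ᵥ A *ᵥ a))).1 hint.integrableOn
  calc ∫ a in D, Real.exp (-(1 / 2) * (a ⬝ᵥ A *ᵥ a) + β * ∑ j, |a j| ^ 3)
      ≤ ∫ a in D, Real.exp (32 * β * r ^ 3 * Fintype.card ι) *
          (|(T' a).det| • Real.exp (-(1 / 2) * (T a ⬝ᵥ A *ᵥ T a))) := by
        refine setIntegral_mono_on ?_ (hion.const_mul _) hmeas key
        exact ContinuousOn.integrableOn_compact hDc (Continuous.continuousOn (by fun_prop))
    _ = Real.exp (32 * β * r ^ 3 * Fintype.card ι) *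
          ∫ a in T '' D, Real.exp (-(1 / 2) * (a ⬝ᵥ A *ᵥ a)) := by
        rw [integral_const_mul, himg]
    _ ≤ _ := by
        exact mul_le_mul_of_nonneg_left
          (setIntegral_le_integral hint (ae_of_all _ fun _ => (Real.exp_pos _).le)) (Real.exp_pos _).le

end GaussianPerturbation

section TorusLaplacian

variable (L : Fin 3 → ℕ)

lemma lap_isSymm : (lap L).IsSymm := by
  ext x y
  have h1 : ∀ i, (x = y + unitVec L i) ↔ (y = x - unitVec L i) := fun i => by
    rw [eq_sub_iff_add_eq, eq_comm]
  have h2 : ∀ i, (x = y - unitVec L i) ↔ (y = x + unitVec L i) := fun i => by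
    rw [eq_sub_iff_add_eq, eq_comm]
  simp only [lap, transpose_apply, of_apply, h1, h2, eq_comm (a := x) (b := y)]
  congr 1
  exact Finset.sum_congr rfl fun i _ => add_comm _ _

/-- Eigenvalue of the negative Laplacian at frequency `k`. -/
def lapSymbol (k : Torus L) : ℝ :=
  ∑ i, (2 - 2 * Real.cos (2 * Real.pi * (k i).val / L i))

lemma lapSymbol_nonneg (k : Torus L) : 0 ≤ lapSymbol L k :=
  Finset.sum_nonneg fun i _ => by linarith [Real.cos_le_one (2 * Real.pi * (k i).val / L i)]

variable [∀ i, NeZero (L i)]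

lemma lap_mulVec (f : Torus L → ℝ) (x : Torus L) :
    (lap L *ᵥ f) x = ∑ i, (f (x + unitVec L i) + f (x - unitVec L i) - 2 * f x) := by
  have h : ∀ g : Fin 3 → Torus L,
      ∑ y, ∑ i, (if y = g i then f y else 0) = ∑ i, f (g i) := fun g => by
    rw [Finset.sum_comm]; simp
  simp only [mulVec, dotProduct, lap, of_apply, sub_mul, Finset.sum_sub_distrib, Finset.sum_mul,
    add_mul, Finset.sum_add_distrib, ite_mul, one_mul, zero_mul, h]
  simp
  ring

lemma dotProduct_lap_mulVec_nonpos (f : Torus L → ℝ) : f ⬝ᵥ lap L *ᵥ f ≤ 0 := by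
  simp only [dotProduct, lap_mulVec, Finset.mul_sum]
  rw [Finset.sum_comm]
  refine Finset.sum_nonpos fun i _ => ?_
  have h1 : ∑ x, f (x + unitVec L i) ^ 2 = ∑ x, f x ^ 2 :=
    Equiv.sum_comp (Equiv.addRight (unitVec L i)) fun x => f x ^ 2
  have h2 : ∑ x, f (x - unitVec L i) ^ 2 = ∑ x, f x ^ 2 :=
    Equiv.sum_comp (Equiv.subRight (unitVec L i)) fun x => f x ^ 2
  have h3 : ∑ x, f x * (f (x + unitVec L i) + f (x - unitVec L i) - 2 * f x)
      ≤ ∑ x, (f (x + unitVec L i) ^ 2 / 2 + f (x - unitVec L i) ^ 2 / 2 - f x ^ 2) := by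
    refine Finset.sum_le_sum fun x _ => ?_
    nlinarith [sq_nonneg (f (x + unitVec L i) - f x), sq_nonneg (f (x - unitVec L i) - f x)]
  rw [Finset.sum_sub_distrib, Finset.sum_add_distrib, ← Finset.sum_div, ← Finset.sum_div, h1,
    h2] at h3
  linarith

/-- Real part of the character of the torus with frequency `k`. -/
def torusCos (k x : Torus L) : ℝ := (∏ i, ZMod.stdAddChar (k i * x i)).re

lemma torusCos_zero (k : Torus L) : torusCos L k 0 = 1 := by simp [torusCos]

lemma stdAddChar_add_neg {n : ℕ} [NeZero n] (j : ZMod n) :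
    ZMod.stdAddChar j + ZMod.stdAddChar (-j) = ((2 * Real.cos (2 * Real.pi * j.val / n) : ℝ) : ℂ) := by
  rw [AddChar.map_neg_eq_inv, ZMod.stdAddChar_apply, ZMod.toCircle_apply, ← Complex.exp_neg]
  push_cast
  rw [Complex.two_cos]
  congr 2 <;> ring

lemma torusCos_add_unitVec (k x : Torus L) (i : Fin 3) :
    torusCos L k (x + unitVec L i) + torusCos L k (x - unitVec L i)
      = 2 * Real.cos (2 * Real.pi * (k i).val / L i) * torusCos L k x := by
  have hp : ∏ j, (ZMod.stdAddChar (k j * unitVec L i j) : ℂ) = ZMod.stdAddChar (k i) := by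
    rw [Finset.prod_eq_single i] <;> simp +contextual [unitVec]
  have hm : ∏ j, (ZMod.stdAddChar (-(k j * unitVec L i j)) : ℂ) = ZMod.stdAddChar (-k i) := by
    rw [Finset.prod_eq_single i] <;> simp +contextual [unitVec]
  simp only [torusCos, Pi.add_apply, Pi.sub_apply, mul_add, sub_eq_add_neg, mul_neg,
    AddChar.map_add_eq_mul, Finset.prod_mul_distrib, hp, hm]
  rw [← Complex.add_re, ← mul_add, stdAddChar_add_neg, Complex.re_mul_ofReal, mul_comm]

lemma sum_torusCos (x : Torus L) :
    ∑ k, torusCos L k x = if x = 0 then (Fintype.card (Torus L) : ℝ) else 0 := by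
  have h : ∑ k : Torus L, ∏ i, (ZMod.stdAddChar (k i * x i) : ℂ)
      = ∏ i, ∑ j : ZMod (L i), ZMod.stdAddChar (j * x i) := by
    rw [Finset.prod_univ_sum, Fintype.piFinset_univ]
  simp only [torusCos, ← Complex.re_sum]
  rw [h]
  simp only [fun i => AddChar.sum_mulShift (x i) (ZMod.isPrimitive_stdAddChar (L i))]
  split_ifs with hx
  · subst hx
    simp [Fintype.card_pi, Fin.prod_univ_three]
  · obtain ⟨i, hi⟩ := Function.ne_iff.1 hx
    rw [Finset.prod_eq_zero (Finset.mem_univ i) (by simp [show x i ≠ 0 from hi]), Complex.zero_re]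

/-- Fourier representation of the Green function of `-t Δ + μ`. -/
def torusGreen (t μ : ℝ) : Matrix (Torus L) (Torus L) ℝ :=
  Matrix.of fun x y =>
    (Fintype.card (Torus L) : ℝ)⁻¹ * ∑ k, torusCos L k (x - y) / (t * lapSymbol L k + μ)

lemma lap_mul_torusGreen {t μ : ℝ} (ht : 0 ≤ t) (hμ : 0 < μ) :
    (t • (-lap L) + μ • 1) * torusGreen L t μ = 1 := by
  ext x y
  have hcol : ((t • (-lap L) + μ • 1) * torusGreen L t μ) x y
      = ((t • (-lap L) + μ • 1) *ᵥ fun z => torusGreen L t μ z y) x := rfl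
  rw [hcol, Matrix.add_mulVec, Matrix.smul_mulVec, Matrix.neg_mulVec, Matrix.smul_mulVec,
    Matrix.one_mulVec]
  simp only [Pi.add_apply, Pi.smul_apply, Pi.neg_apply, lap_mulVec, smul_eq_mul]
  have hstep : ∀ i, torusGreen L t μ (x + unitVec L i) y + torusGreen L t μ (x - unitVec L i) y
        - 2 * torusGreen L t μ x y
      = -((Fintype.card (Torus L) : ℝ)⁻¹ * ∑ k,
          (2 - 2 * Real.cos (2 * Real.pi * (k i).val / L i)) *
            (torusCos L k (x - y) / (t * lapSymbol L k + μ))) := by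
    intro i
    simp only [torusGreen, of_apply]
    rw [← mul_add, mul_left_comm, ← mul_sub, ← mul_neg, Finset.mul_sum, ← Finset.sum_add_distrib,
      ← Finset.sum_sub_distrib, ← Finset.sum_neg_distrib]
    congr 1
    refine Finset.sum_congr rfl fun k _ => ?_
    have h := torusCos_add_unitVec L k (x - y) i
    rw [show x + unitVec L i - y = x - y + unitVec L i by abel,
      show x - unitVec L i - y = x - y - unitVec L i by abel, ← add_div, h]
    ring
  rw [Finset.sum_congr rfl fun i _ => hstep i, Finset.sum_neg_distrib, neg_neg, ← Finset.mul_sum,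
    Finset.sum_comm]
  simp only [← Finset.sum_mul, torusGreen, of_apply]
  have hk : ∀ k, (t * lapSymbol L k + μ) * (torusCos L k (x - y) / (t * lapSymbol L k + μ))
      = torusCos L k (x - y) := fun k => by
    have : 0 < t * lapSymbol L k + μ := by
      have := mul_nonneg ht (lapSymbol_nonneg L k); linarith
    field_simp
  have hsum := sum_torusCos L (x - y)
  rw [← Finset.sum_congr rfl fun k _ => hk k] at hsum
  simp only [add_mul, Finset.sum_add_distrib, mul_assoc, ← Finset.mul_sum] at hsum
  have hN : (Fintype.card (Torus L) : ℝ) ≠ 0 := by exact_mod_cast Fintype.card_ne_zero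
  calc _ = (Fintype.card (Torus L) : ℝ)⁻¹ * (if x - y = 0 then (Fintype.card (Torus L) : ℝ) else 0) := by
        rw [← hsum]; simp only [lapSymbol]; ring
    _ = _ := by
        by_cases hxy : x = y
        · rw [hxy, sub_self, if_pos rfl, inv_mul_cancel₀ hN, one_apply_eq]
        · simp [hxy, sub_ne_zero.2 hxy]

lemma le_two_sub_two_mul_cos {n : ℕ} [NeZero n] (j : ZMod n) :
    16 * (zdist j : ℝ) ^ 2 / (n : ℝ) ^ 2 ≤ 2 - 2 * Real.cos (2 * Real.pi * j.val / n) := by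
  have hn : (0 : ℝ) < n := by exact_mod_cast NeZero.pos n
  have hj : j.val ≤ n := (ZMod.val_lt j).le
  have hsin : Real.sin (Real.pi * zdist j / n) = Real.sin (Real.pi * j.val / n) := by
    unfold zdist
    rcases min_choice j.val (n - j.val) with h | h <;> rw [h]
    rw [Nat.cast_sub hj, ← Real.sin_pi_sub]
    congr 1
    field_simp
    ring
  have hz : 2 * (zdist j : ℝ) ≤ n := by
    have : 2 * zdist j ≤ n := by unfold zdist; omega
    exact_mod_cast this
  have hle := Real.mul_le_sin (x := Real.pi * zdist j / n) (by positivity) (by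
    rw [div_le_div_iff₀ hn two_pos]; nlinarith [Real.pi_pos])
  rw [hsin] at hle
  have h1 : 2 / Real.pi * (Real.pi * zdist j / n) = 2 * zdist j / n := by
    field_simp
  rw [h1] at hle
  have h2 : 2 - 2 * Real.cos (2 * Real.pi * j.val / n) = 4 * Real.sin (Real.pi * j.val / n) ^ 2 := by
    rw [show 2 * Real.pi * j.val / n = 2 * (Real.pi * j.val / n) by ring, Real.cos_two_mul,
      Real.cos_sq']
    ring
  rw [h2]
  have h3 := pow_le_pow_left₀ (by positivity) hle 2
  calc 16 * (zdist j : ℝ) ^ 2 / (n : ℝ) ^ 2 = 4 * (2 * zdist j / n : ℝ) ^ 2 := by ring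
    _ ≤ _ := by linarith

/-- The weight `(j + 1) ^ (-2/3)`. -/
def twoThirdsWeight (j : ℕ) : ℝ := ((((j + 1 : ℕ) : ℝ) ^ (1 / 3 : ℝ)) ^ 2)⁻¹

lemma rpow_third_pow_three (j : ℕ) : ((j : ℝ) ^ (1 / 3 : ℝ)) ^ 3 = j := by
  rw [← Real.rpow_natCast, ← Real.rpow_mul (by positivity)]; norm_num

lemma sum_range_twoThirdsWeight_le (n : ℕ) :
    ∑ j ∈ Finset.range n, twoThirdsWeight j ≤ 3 * (n : ℝ) ^ (1 / 3 : ℝ) := by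
  induction n with
  | zero => simp
  | succ n ih =>
    rw [Finset.sum_range_succ, twoThirdsWeight]
    have hv := rpow_third_pow_three n
    have hu := rpow_third_pow_three (n + 1)
    have hv0 : 0 ≤ (n : ℝ) ^ (1 / 3 : ℝ) := by positivity
    have hu0 : 0 < ((n + 1 : ℕ) : ℝ) ^ (1 / 3 : ℝ) := by positivity
    have huv : (n : ℝ) ^ (1 / 3 : ℝ) ≤ ((n + 1 : ℕ) : ℝ) ^ (1 / 3 : ℝ) :=
      Real.rpow_le_rpow (by positivity) (by push_cast; linarith) (by norm_num)
    set u := ((n + 1 : ℕ) : ℝ) ^ (1 / 3 : ℝ)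
    set v := (n : ℝ) ^ (1 / 3 : ℝ)
    push_cast at hu
    have h1 : (u ^ 2)⁻¹ ≤ 3 * (u - v) := by
      rw [inv_le_iff_one_le_mul₀ (by positivity)]
      have : 1 = (u - v) * (u ^ 2 + u * v + v ^ 2) := by ring_nf; linarith
      rw [this]
      have h2 : u ^ 2 + u * v + v ^ 2 ≤ 3 * u ^ 2 := by nlinarith
      nlinarith [mul_le_mul_of_nonneg_left h2 (sub_nonneg.2 huv)]
    linarith

lemma twoThirdsWeight_antitone : Antitone twoThirdsWeight := by
  intro i j hij
  unfold twoThirdsWeight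
  gcongr

lemma twoThirdsWeight_pos (j : ℕ) : 0 < twoThirdsWeight j := by
  unfold twoThirdsWeight; positivity

lemma sum_twoThirdsWeight_zdist_le {n : ℕ} [NeZero n] :
    ∑ j : ZMod n, twoThirdsWeight (zdist j) ≤ 6 * (n : ℝ) ^ (1 / 3 : ℝ) := by
  have hval : ∀ f : ℕ → ℝ, ∑ j : ZMod n, f j.val = ∑ j ∈ Finset.range n, f j := by
    intro f
    obtain _ | m := n
    · exact absurd rfl (NeZero.ne 0)
    · exact Fin.sum_univ_eq_sum_range f (m + 1)
  have h1 : ∑ j : ZMod n, twoThirdsWeight (zdist j)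
      ≤ ∑ j ∈ Finset.range n, (twoThirdsWeight j + twoThirdsWeight (n - 1 - j)) := by
    rw [← hval fun j => twoThirdsWeight j + twoThirdsWeight (n - 1 - j)]
    refine Finset.sum_le_sum fun j _ => ?_
    unfold zdist
    have h2 := twoThirdsWeight_antitone (show n - 1 - j.val ≤ n - j.val by omega)
    have h3 := twoThirdsWeight_pos j.val
    have h4 := twoThirdsWeight_pos (n - 1 - j.val)
    rcases min_choice j.val (n - j.val) with h | h <;> rw [h] <;> linarith
  rw [Finset.sum_add_distrib, Finset.sum_range_reflect] at h1
  linarith [sum_range_twoThirdsWeight_le n]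

/-- The reciprocal of a three dimensional quadratic symbol is dominated by a product of
one dimensional weights. -/
lemma inv_le_prod_twoThirdsWeight (n : Fin 3 → ℕ) {c : ℝ}
    (hc : 3 + ∑ i, (n i : ℝ) ^ 2 ≤ c) : c⁻¹ ≤ ∏ i, twoThirdsWeight (n i) := by
  have hu := fun i => rpow_third_pow_three (n i + 1)
  have hu0 : ∀ i, 0 < ((n i + 1 : ℕ) : ℝ) ^ (1 / 3 : ℝ) := fun i => by positivity
  simp only [twoThirdsWeight, Finset.prod_inv_distrib]
  set u : Fin 3 → ℝ := fun i => ((n i + 1 : ℕ) : ℝ) ^ (1 / 3 : ℝ)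
  have hsq : ∀ i, (u i ^ 2) ^ 3 ≤ 2 * (1 + (n i : ℝ) ^ 2) := fun i => by
    rw [← pow_mul, mul_comm, pow_mul]
    simp only [u]
    rw [hu i]
    push_cast
    nlinarith [sq_nonneg ((n i : ℝ) - 1)]
  have hamgm : ∀ x y z : ℝ, 0 < x → 0 < y → 0 < z → 3 * (x * y * z) ≤ x ^ 3 + y ^ 3 + z ^ 3 := by
    intro x y z hx hy hz
    nlinarith [mul_nonneg (by positivity : 0 ≤ x + y + z) (by positivity :
      0 ≤ (x - y) ^ 2 + (y - z) ^ 2 + (x - z) ^ 2)]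
  have hp := hamgm (u 0 ^ 2) (u 1 ^ 2) (u 2 ^ 2) (by have := hu0 0; positivity)
    (by have := hu0 1; positivity) (by have := hu0 2; positivity)
  have hpos : 0 < ∏ i, u i ^ 2 := Finset.prod_pos fun i _ => pow_pos (hu0 i) 2
  refine inv_anti₀ hpos ?_
  rw [Fin.prod_univ_three] at hpos ⊢
  rw [Fin.sum_univ_three] at hc
  linarith [hsq 0, hsq 1, hsq 2]

lemma torusGreen_apply_self_le {W : ℕ} (hL : ∀ i, L i = W) {μ : ℝ} (hμ : 0.38 ≤ μ)
    (x : Torus L) : torusGreen L ((W : ℝ) ^ 2) μ x x ≤ (42 / (W : ℝ)) ^ 2 := by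
  have hW : (0 : ℝ) < W := by
    have := NeZero.pos (L 0); rw [hL 0] at this; exact_mod_cast this
  have hcard : (Fintype.card (Torus L) : ℝ) = (W : ℝ) ^ 3 := by
    simp [Fintype.card_pi, hL, ZMod.card]
  simp only [torusGreen, of_apply, sub_self, torusCos_zero, hcard, one_div]
  have hterm : ∀ k : Torus L, ((W : ℝ) ^ 2 * lapSymbol L k + μ)⁻¹
      ≤ 8 * ∏ i, twoThirdsWeight (zdist (k i)) := by
    intro k
    have hs : 16 * ∑ i, (zdist (k i) : ℝ) ^ 2 ≤ (W : ℝ) ^ 2 * lapSymbol L k := by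
      rw [lapSymbol, Finset.mul_sum, Finset.mul_sum]
      refine Finset.sum_le_sum fun i _ => ?_
      have h := le_two_sub_two_mul_cos (k i)
      have hLi : (L i : ℝ) = W := by rw [hL i]
      rw [div_le_iff₀ (by rw [hLi]; positivity)] at h
      rw [hLi] at h ⊢
      linarith
    have h0 : 0 ≤ ∑ i, (zdist (k i) : ℝ) ^ 2 := Finset.sum_nonneg fun i _ => by positivity
    have h := inv_le_prod_twoThirdsWeight (fun i => zdist (k i))
      (c := 8 * ((W : ℝ) ^ 2 * lapSymbol L k + μ)) (by linarith)
    rw [mul_inv] at h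
    linarith
  have hprod : ∑ k : Torus L, ∏ i, twoThirdsWeight (zdist (k i)) ≤ 216 * (W : ℝ) := by
    have h : ∑ k : Torus L, ∏ i, twoThirdsWeight (zdist (k i))
        = ∏ i, ∑ j : ZMod (L i), twoThirdsWeight (zdist j) := by
      rw [Finset.prod_univ_sum, Fintype.piFinset_univ]
    rw [h]
    calc ∏ i, ∑ j : ZMod (L i), twoThirdsWeight (zdist j)
        ≤ ∏ _i : Fin 3, 6 * (W : ℝ) ^ (1 / 3 : ℝ) := by
          refine Finset.prod_le_prod
            (fun i _ => Finset.sum_nonneg fun j _ => (twoThirdsWeight_pos _).le) fun i _ => ?_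
          rw [← hL i]
          exact sum_twoThirdsWeight_zdist_le
      _ = 216 * (W : ℝ) := by
          rw [Finset.prod_const, Finset.card_univ, Fintype.card_fin, mul_pow, rpow_third_pow_three]
          norm_num
  have hsum : ∑ k : Torus L, ((W : ℝ) ^ 2 * lapSymbol L k + μ)⁻¹ ≤ 8 * (216 * W) := by
    refine (Finset.sum_le_sum fun k _ => hterm k).trans ?_
    rw [← Finset.mul_sum]
    gcongr
  calc ((W : ℝ) ^ 3)⁻¹ * ∑ k : Torus L, ((W : ℝ) ^ 2 * lapSymbol L k + μ)⁻¹
      ≤ ((W : ℝ) ^ 3)⁻¹ * (8 * (216 * W)) := by gcongr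
    _ ≤ (42 / (W : ℝ)) ^ 2 := by
      rw [div_pow, inv_mul_le_iff₀ (by positivity)]
      have : (W : ℝ) ^ 3 * (42 ^ 2 / (W : ℝ) ^ 2) = 1764 * W := by field_simp; norm_num
      rw [this]
      linarith

end TorusLaplacian

/-- Brascamp–Lieb estimate on the small-field partition function:
`Z(H) ≤ e^{K|Λ|/W³} Z₀` where `H(a) = aᵀC⁻¹a - κ Σ_j (|a_j|³ + |a_j|/W²)` and the integral
defining `Z(H)` is restricted to the small-field region `I¹ = {|a_j| ≤ W^{-1/8} ∀j}`. -/
theorem partition_function_bound (η : ℝ) (hη : 0 < η) (κ : ℝ) (hκ : 0 < κ) :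
    ∃ (W₀ : ℕ) (K : ℝ),
      ∀ (W : ℕ), W₀ ≤ W →
      ∀ (L : Fin 3 → ℕ) [∀ i, NeZero (L i)], (∀ i, L i = W) →
      ∀ E ∈ specI η,
        (∫ a in {a : Torus L → ℝ | ∀ j, |a j| ≤ (W : ℝ) ^ (-(1 / 8 : ℝ))},
            Real.exp (-(1 / 2) *
              (qf L ((Cmat L W E)⁻¹) a - κ * ∑ j, (|a j| ^ 3 + |a j| / (W : ℝ) ^ 2))))
          ≤ Real.exp (K * (Fintype.card (Torus L) : ℝ) / (W : ℝ) ^ 3) *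
            ∫ a : Torus L → ℝ, Real.exp (-(1 / 2) * qf L ((Cmat L W E)⁻¹) a) := by
  obtain ⟨W₀, hW₀⟩ : ∃ W₀ : ℕ, ∀ W : ℕ, W₀ ≤ W →
      16 * κ * (W : ℝ) ^ (-(1 / 8 : ℝ)) ≤ 0.38 := by
    have h : Tendsto (fun W : ℕ => 16 * κ * (W : ℝ) ^ (-(1 / 8 : ℝ))) atTop (𝓝 (16 * κ * 0)) :=
      ((tendsto_rpow_neg_atTop (by norm_num)).comp tendsto_natCast_atTop_atTop).const_mul _
    rw [mul_zero] at h
    exact eventually_atTop.1 (h.eventually_le_const (by norm_num))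
  refine ⟨W₀, 32 * κ * 42 ^ 3 + κ / 2, fun W hWW L _ hL E hE => ?_⟩
  have hW : (0 : ℝ) < W := by
    have := NeZero.pos (L 0); rw [hL 0] at this; exact_mod_cast this
  have hμ : 0.38 ≤ mr2 E := by
    have h := pow_le_pow_left₀ (abs_nonneg E) hE.2 2
    rw [sq_abs] at h
    unfold mr2
    norm_num at h ⊢
    linarith
  have hμ0 : 0 < mr2 E := lt_of_lt_of_le (by norm_num) hμ
  set A : Matrix (Torus L) (Torus L) ℝ := ((W : ℝ) ^ 2) • (-lap L) + mr2 E • 1 with hAdef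
  have hAC : A * torusGreen L ((W : ℝ) ^ 2) (mr2 E) = 1 :=
    lap_mul_torusGreen L (by positivity) hμ0
  have hinv : (Cmat L W E)⁻¹ = A :=
    Matrix.nonsing_inv_nonsing_inv A (Matrix.isUnit_det_of_right_inverse hAC)
  have hsymm : A.IsSymm := by
    simp [Matrix.IsSymm, hAdef, (lap_isSymm L).eq]
  have hA : ∀ x : Torus L → ℝ, 0.38 * (x ⬝ᵥ x) ≤ x ⬝ᵥ A *ᵥ x := by
    intro x
    have h0 : 0 ≤ x ⬝ᵥ x := by simpa using dotProduct_star_self_nonneg x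
    have h1 := mul_nonneg (sq_nonneg (W : ℝ)) (neg_nonneg.2 (dotProduct_lap_mulVec_nonpos L x))
    simp only [hAdef, Matrix.add_mulVec, Matrix.smul_mulVec, Matrix.neg_mulVec, Matrix.one_mulVec,
      dotProduct_add, dotProduct_smul, dotProduct_neg, smul_eq_mul]
    nlinarith [mul_le_mul_of_nonneg_right hμ h0]
  have hmain := integral_exp_cubic_le hAC hsymm (β := κ) (δ := (W : ℝ) ^ (-(1 / 8 : ℝ)))
    (r := 42 / (W : ℝ)) (by norm_num) hκ (by positivity) hA (hW₀ W hWW)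
    (torusGreen_apply_self_le L hL hμ)
  set D : Set (Torus L → ℝ) := {a | ∀ j, |a j| ≤ (W : ℝ) ^ (-(1 / 8 : ℝ))} with hD
  have hDc : IsCompact D := by
    have : D = Set.pi Set.univ fun _ =>
        Set.Icc (-(W : ℝ) ^ (-(1 / 8 : ℝ))) ((W : ℝ) ^ (-(1 / 8 : ℝ))) := by
      ext a; simp only [hD, Set.mem_ofPred_eq, abs_le, Set.mem_univ_pi, Set.mem_Icc]
    rw [this]
    exact isCompact_univ_pi fun _ => isCompact_Icc
  simp only [qf, hinv]
  set N : ℝ := (Fintype.card (Torus L) : ℝ)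
  have hpt : ∀ a ∈ D, Real.exp (-(1 / 2) * (a ⬝ᵥ A *ᵥ a -
        κ * ∑ j, (|a j| ^ 3 + |a j| / (W : ℝ) ^ 2)))
      ≤ Real.exp (κ / 2 * N / (W : ℝ) ^ 3) *
        Real.exp (-(1 / 2) * (a ⬝ᵥ A *ᵥ a) + κ * ∑ j, |a j| ^ 3) := by
    intro a _
    rw [← Real.exp_add, Real.exp_le_exp]
    have hlin : ∑ j, |a j| / (W : ℝ) ^ 2 ≤ ∑ j, |a j| ^ 3 + N / (W : ℝ) ^ 3 := by
      have hN : N / (W : ℝ) ^ 3 = ∑ _j : Torus L, (1 / (W : ℝ)) ^ 3 := by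
        simp only [Finset.sum_const, Finset.card_univ, nsmul_eq_mul, N]; ring
      rw [hN, ← Finset.sum_add_distrib]
      refine Finset.sum_le_sum fun j _ => ?_
      have h1 : |a j| / (W : ℝ) ^ 2 = |a j| * (1 / (W : ℝ)) ^ 2 := by ring
      rw [h1]
      have h2 := abs_nonneg (a j)
      have h3 : 0 ≤ 1 / (W : ℝ) := by positivity
      rcases le_total (|a j|) (1 / (W : ℝ)) with h | h
      · have := mul_le_mul_of_nonneg_right h (sq_nonneg (1 / (W : ℝ)))
        have := pow_nonneg h2 3
        linarith
      · have := mul_le_mul_of_nonneg_left (pow_le_pow_left₀ h3 h 2) h2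
        have := pow_nonneg h3 3
        linarith
    rw [Finset.sum_add_distrib]
    have := mul_le_mul_of_nonneg_left hlin (by positivity : 0 ≤ κ / 2)
    have h4 : κ / 2 * N / (W : ℝ) ^ 3 = κ / 2 * (N / (W : ℝ) ^ 3) := by ring
    rw [h4]
    linarith
  calc ∫ a in D, Real.exp (-(1 / 2) * (a ⬝ᵥ A *ᵥ a -
          κ * ∑ j, (|a j| ^ 3 + |a j| / (W : ℝ) ^ 2)))
      ≤ ∫ a in D, Real.exp (κ / 2 * N / (W : ℝ) ^ 3) *
          Real.exp (-(1 / 2) * (a ⬝ᵥ A *ᵥ a) + κ * ∑ j, |a j| ^ 3) := by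
        refine setIntegral_mono_on ?_ ?_ hDc.isClosed.measurableSet hpt
        · exact ContinuousOn.integrableOn_compact hDc (Continuous.continuousOn (by fun_prop))
        · exact ContinuousOn.integrableOn_compact hDc (Continuous.continuousOn (by fun_prop))
    _ = Real.exp (κ / 2 * N / (W : ℝ) ^ 3) *
          ∫ a in D, Real.exp (-(1 / 2) * (a ⬝ᵥ A *ᵥ a) + κ * ∑ j, |a j| ^ 3) :=
        integral_const_mul _ _
    _ ≤ Real.exp (κ / 2 * N / (W : ℝ) ^ 3) * (Real.exp (32 * κ * (42 / (W : ℝ)) ^ 3 * N) *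
          ∫ a : Torus L → ℝ, Real.exp (-(1 / 2) * (a ⬝ᵥ A *ᵥ a))) :=
        mul_le_mul_of_nonneg_left hmain (Real.exp_pos _).le
    _ = _ := by
        rw [← mul_assoc, ← Real.exp_add]
        congr 2
        ring
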